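/- arXiv:2511.02705 — 2 statements merged into one kernel-verified Lean document; each statement's English description precedes it below -/
import Mathlib

section
/- Let G0 = (V, E0⁺, E0⁻, F, H) be a ConstrainedCC instance admitting at least one feasible clustering, and let G = (V, E⁺, E⁻, F, H) be its consistent form, i.e., the instance with the same vertices and constraint sets in which uv ∈ E⁺ whenever s(u) = s(v), uv ∈ E⁻ whenever (S(u), S(v)) ∈ H, and otherwise uv has the same sign as in G0. Then for every real α ≥ 1 and every feasible clustering C: if cost_G(C) ≤ α · cost_G(C*) for every feasible clustering C*, then also cost_{G0}(C) ≤ α · cost_{G0}(C*) for every feasible clustering C*. That is, an α-approximate feasible clustering for G is an α-approximate feasible clustering for G0. -/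
/-!
On edges whose sign is the same in `G0` and `G`, every clustering pays the same in both instances.
An edge whose sign differs is determined by the constraints: either its endpoints share a supernode,
so it is positive in `G`, negative in `G0`, and merged by every feasible clustering, or its endpoints
lie in hostile supernodes, so it is negative in `G`, positive in `G0`, and separated by every
feasible clustering. In both cases it costs `0` in `G` and `1` in `G0`. Hence the two costs of a
feasible clustering differ by the number `K` of flipped edges (`cost_eq_add_flipped`), a constant
independent of the clustering, and adding `K ≥ 0` to both sides preserves an `α`-approximation
because `α ≥ 1`.
-/

open scoped Classical

namespace CCC

/-- A Constrained Correlation Clustering instance: a partition of the unordered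
pairs of distinct vertices into positive edges `Ep` and negative edges `En`,
together with friendly constraints `F` and hostile constraints `H`. -/
structure CCInst (V : Type*) where
  Ep : Finset (Sym2 V)
  En : Finset (Sym2 V)
  F : Finset (Sym2 V)
  H : Finset (Sym2 V)
  mem_Ep_iff : ∀ e : Sym2 V, e ∈ Ep ↔ (¬ e.IsDiag ∧ e ∉ En)
  not_isDiag_of_mem_En : ∀ e ∈ En, ¬ e.IsDiag
  not_isDiag_of_mem_F : ∀ e ∈ F, ¬ e.IsDiag
  not_isDiag_of_mem_H : ∀ e ∈ H, ¬ e.IsDiag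

variable {V : Type*} [Fintype V] [DecidableEq V]

/-- `u` and `v` lie in the same supernode (connected component of `(V, F)`). -/
def sameSuper (G : CCInst V) (u v : V) : Prop :=
  Relation.ReflTransGen (fun a b => s(a, b) ∈ G.F) u v

/-- The (distinct) supernodes of `u` and `v` are hostile. -/
def hostileSuper (G : CCInst V) (u v : V) : Prop :=
  ¬ sameSuper G u v ∧ ∃ a b : V, sameSuper G u a ∧ sameSuper G v b ∧ s(a, b) ∈ G.H

/-- A clustering is feasible if it merges all friendly pairs and separates all hostile pairs. -/
def Feasible (G : CCInst V) {L : Type*} (C : V → L) : Prop :=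
  (∀ u v : V, s(u, v) ∈ G.F → C u = C v) ∧ ∀ u v : V, s(u, v) ∈ G.H → C u ≠ C v

/-- The cost of a clustering: positive edges cut plus negative edges not cut. -/
noncomputable def cost (G : CCInst V) {L : Type*} (C : V → L) : ℕ :=
  (G.Ep.filter fun e => ¬ (e.map C).IsDiag).card +
    (G.En.filter fun e => (e.map C).IsDiag).card

/-- `G` is in consistent form. -/
def ConsistentForm (G : CCInst V) : Prop :=
  (∀ u v : V, u ≠ v → sameSuper G u v → s(u, v) ∈ G.Ep) ∧
    ∀ u v : V, hostileSuper G u v → s(u, v) ∈ G.En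

/-- `G` is the consistent form of `G0`. -/
def IsConsistentFormOf (G G0 : CCInst V) : Prop :=
  G.F = G0.F ∧ G.H = G0.H ∧
    ∀ u v : V, u ≠ v →
      (sameSuper G0 u v → s(u, v) ∈ G.Ep) ∧
      (hostileSuper G0 u v → s(u, v) ∈ G.En) ∧
      (¬ sameSuper G0 u v → ¬ hostileSuper G0 u v → (s(u, v) ∈ G.Ep ↔ s(u, v) ∈ G0.Ep))

/-- `(e, f)` is a dangerous pair: `e = ab`, `f = cd` are positive edges with
`s(b) = s(c)` and `(S(a), S(d)) ∈ H`. -/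
def IsDangerousPair (G : CCInst V) (e f : Sym2 V) : Prop :=
  ∃ a b c d : V, e = s(a, b) ∧ f = s(c, d) ∧ e ∈ G.Ep ∧ f ∈ G.Ep ∧
    sameSuper G b c ∧ hostileSuper G a d

/-- The edge `e` occurs in the pair `p`. -/
def InPair (e : Sym2 V) (p : Sym2 V × Sym2 V) : Prop := e = p.1 ∨ e = p.2

/-- Every edge occurs in at most one member of `D`. -/
def EdgeDisjoint (D : Finset (Sym2 V × Sym2 V)) : Prop :=
  ∀ p ∈ D, ∀ q ∈ D, ∀ e : Sym2 V, InPair e p → InPair e q → p = q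

/-- `D` is an edge-disjoint set of dangerous pairs. -/
def DangerousFamily (G : CCInst V) (D : Finset (Sym2 V × Sym2 V)) : Prop :=
  (∀ p ∈ D, IsDangerousPair G p.1 p.2) ∧ EdgeDisjoint D

/-- `D` is a maximal edge-disjoint set of dangerous pairs. -/
def MaximalDangerous (G : CCInst V) (D : Finset (Sym2 V × Sym2 V)) : Prop :=
  DangerousFamily G D ∧
    ∀ e f : Sym2 V, IsDangerousPair G e f → EdgeDisjoint (insert (e, f) D) → (e, f) ∈ D

/-- `E_𝒟`: the set of edges occurring in members of `D`. -/
def EDset (D : Finset (Sym2 V × Sym2 V)) : Set (Sym2 V) :=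
  {e | ∃ p ∈ D, InPair e p}

/-- `f` is the partner edge `ρ(e)` of `e` in `D`. -/
def Partner (D : Finset (Sym2 V × Sym2 V)) (e f : Sym2 V) : Prop :=
  (e, f) ∈ D ∨ (f, e) ∈ D

/-- The induced edge value `x_{uv}` of an LP solution. -/
noncomputable def xval (G : CCInst V) (Xp Xn : Sym2 V → ℝ) (e : Sym2 V) : ℝ :=
  if e ∈ G.Ep then Xp e else Xn e

/-- The LP objective value `∑_{uv} x_{uv}`, summed over all unordered pairs of
distinct vertices. -/
noncomputable def lpObj (G : CCInst V) (Xp Xn : Sym2 V → ℝ) : ℝ :=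
  ∑ e ∈ Finset.univ.filter (fun e : Sym2 V => ¬ e.IsDiag), xval G Xp Xn e

/-- `(Xp, Xn)` is a feasible solution of the constrained covering LP (with
HEAP constraints coming from the dangerous pairs `D`).  The variables are
indexed by unordered pairs of vertices but must only depend on the pair of
supernodes of the endpoints. -/
structure IsLPSol (G : CCInst V) (D : Finset (Sym2 V × Sym2 V))
    (Xp Xn : Sym2 V → ℝ) : Prop where
  nonneg_p : ∀ e : Sym2 V, 0 ≤ Xp e
  nonneg_n : ∀ e : Sym2 V, 0 ≤ Xn e
  congr_p : ∀ u v u' v' : V, sameSuper G u u' → sameSuper G v v' →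
    Xp s(u, v) = Xp s(u', v')
  congr_n : ∀ u v u' v' : V, sameSuper G u u' → sameSuper G v v' →
    Xn s(u, v) = Xn s(u', v')
  same_p : ∀ u v : V, sameSuper G u v → Xp s(u, v) = 0
  same_n : ∀ u v : V, sameSuper G u v → Xn s(u, v) = 1
  host_n : ∀ u v : V, hostileSuper G u v → Xn s(u, v) = 0
  host_p : ∀ u v : V, hostileSuper G u v → Xp s(u, v) = 1
  tri_ppn : ∀ a b c : V, ¬ sameSuper G a b → ¬ sameSuper G b c → ¬ sameSuper G a c →
    1 ≤ Xp s(a, b) + Xp s(b, c) + Xn s(a, c)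
  tri_pnp : ∀ a b c : V, ¬ sameSuper G a b → ¬ sameSuper G b c → ¬ sameSuper G a c →
    1 ≤ Xp s(a, b) + Xn s(b, c) + Xp s(a, c)
  tri_npp : ∀ a b c : V, ¬ sameSuper G a b → ¬ sameSuper G b c → ¬ sameSuper G a c →
    1 ≤ Xn s(a, b) + Xp s(b, c) + Xp s(a, c)
  pair : ∀ u v : V, 1 ≤ Xp s(u, v) + Xn s(u, v)
  heap : ∀ a b c k l : V, s(a, b) ∈ G.Ep → s(b, c) ∈ G.Ep → s(a, c) ∈ G.Ep →
    ¬ sameSuper G a b → ¬ sameSuper G c b → s(a, c) ∈ EDset D →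
    Partner D s(a, c) s(k, l) →
    1 ≤ xval G Xp Xn s(a, b) + xval G Xp Xn s(b, c) + xval G Xp Xn s(k, l)

/-- `uv ∈ Ê⁺`: positive edges of the auxiliary graph `Ĝ`. -/
def hatPos (G : CCInst V) (D : Finset (Sym2 V × Sym2 V)) (Xp Xn : Sym2 V → ℝ)
    (u v : V) : Prop :=
  u ≠ v ∧ (sameSuper G u v ∨
    ((∃ a b : V, sameSuper G u a ∧ sameSuper G v b ∧ s(a, b) ∈ G.Ep ∧ s(a, b) ∉ EDset D) ∧
      Xp s(u, v) < min (Xn s(u, v)) (2 / 3)))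

/-- `uv ∈ Ê⁻`: negative edges of the auxiliary graph `Ĝ`. -/
def hatNeg (G : CCInst V) (D : Finset (Sym2 V × Sym2 V)) (Xp Xn : Sym2 V → ℝ)
    (u v : V) : Prop :=
  u ≠ v ∧ ¬ hatPos G D Xp Xn u v

/-- `Ê⁺` as a predicate on unordered pairs. -/
def hatPosE (G : CCInst V) (D : Finset (Sym2 V × Sym2 V)) (Xp Xn : Sym2 V → ℝ)
    (e : Sym2 V) : Prop :=
  ∃ u v : V, e = s(u, v) ∧ hatPos G D Xp Xn u v

/-- `Ê⁻` as a predicate on unordered pairs. -/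
def hatNegE (G : CCInst V) (D : Finset (Sym2 V × Sym2 V)) (Xp Xn : Sym2 V → ℝ)
    (e : Sym2 V) : Prop :=
  ¬ e.IsDiag ∧ ¬ hatPosE G D Xp Xn e

/-- `E^{+-} = E⁺ ∩ Ê⁻`. -/
noncomputable def Epm (G : CCInst V) (D : Finset (Sym2 V × Sym2 V)) (Xp Xn : Sym2 V → ℝ) :
    Finset (Sym2 V) :=
  G.Ep.filter fun e => hatNegE G D Xp Xn e

/-- The balanced edges `E^b ⊆ E^{+-}`. -/
noncomputable def Eb (G : CCInst V) (D : Finset (Sym2 V × Sym2 V)) (Xp Xn : Sym2 V → ℝ) :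
    Finset (Sym2 V) :=
  (Epm G D Xp Xn).filter fun e =>
    e ∈ EDset D ∧ ∀ f : Sym2 V, Partner D e f → f ∈ Epm G D Xp Xn

/-- The other flipped positive edges `E^o = E^{+-} \ E^b`. -/
noncomputable def Eo (G : CCInst V) (D : Finset (Sym2 V × Sym2 V)) (Xp Xn : Sym2 V → ℝ) :
    Finset (Sym2 V) :=
  Epm G D Xp Xn \ Eb G D Xp Xn

/-- A signed graph (given by its positive-edge relation `pos`) is pivot-safe for `G`. -/
def PivotSafe (G : CCInst V) (pos : V → V → Prop) : Prop :=
  (∀ i j : V, i ≠ j → sameSuper G i j →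
    pos i j ∧ ∀ k : V, k ≠ i → k ≠ j → (pos i k ↔ pos j k)) ∧
  ∀ i j : V, hostileSuper G i j → ¬ pos i j ∧ ∀ k : V, ¬ (pos i k ∧ pos j k)

/-- `PivotClust pos S C`: the assignment `C` (mapping every vertex of `S` to
the pivot of its cluster) is obtainable by running the pivot procedure on the
vertex set `S` of the signed graph whose positive edges are given by `pos`. -/
inductive PivotClust (pos : V → V → Prop) : Finset V → (V → V) → Prop where
  | nil (C : V → V) : PivotClust pos ∅ C
  | step (S : Finset V) (p : V) (C : V → V) (hp : p ∈ S)
      (h : PivotClust pos (S.filter fun v => ¬ (v = p ∨ pos p v)) C) :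
      PivotClust pos S (fun v => if v ∈ S ∧ (v = p ∨ pos p v) then p else C v)

/-- `T_p⁺` inside the vertex subset `W`. -/
noncomputable def Tpos (G : CCInst V) (D : Finset (Sym2 V × Sym2 V)) (Xp Xn : Sym2 V → ℝ)
    (W : Finset V) (p : V) : Finset (Sym2 V) :=
  Finset.univ.filter fun e : Sym2 V => ∃ u v : V, e = s(u, v) ∧ u ∈ W ∧ v ∈ W ∧
    hatPos G D Xp Xn u v ∧ hatPos G D Xp Xn p u ∧ hatNeg G D Xp Xn p v

/-- `T_p⁻` inside the vertex subset `W`. -/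
noncomputable def Tneg (G : CCInst V) (D : Finset (Sym2 V × Sym2 V)) (Xp Xn : Sym2 V → ℝ)
    (W : Finset V) (p : V) : Finset (Sym2 V) :=
  Finset.univ.filter fun e : Sym2 V => ∃ u v : V, e = s(u, v) ∧ u ∈ W ∧ v ∈ W ∧
    hatNeg G D Xp Xn u v ∧ hatPos G D Xp Xn p u ∧ hatPos G D Xp Xn p v

/-- `A_p⁻ = T_p⁻ \ E^b`. -/
noncomputable def Aneg (G : CCInst V) (D : Finset (Sym2 V × Sym2 V)) (Xp Xn : Sym2 V → ℝ)
    (W : Finset V) (p : V) : Finset (Sym2 V) :=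
  (Tneg G D Xp Xn W p).filter fun e => e ∉ Eb G D Xp Xn

/-- `B_p⁻ = T_p⁻ ∩ E^b`. -/
noncomputable def Bneg (G : CCInst V) (D : Finset (Sym2 V × Sym2 V)) (Xp Xn : Sym2 V → ℝ)
    (W : Finset V) (p : V) : Finset (Sym2 V) :=
  (Tneg G D Xp Xn W p).filter fun e => e ∈ Eb G D Xp Xn

/-- `(Xp, Xn)` is a feasible solution of the friendly covering LP (no hostile
constraints and no HEAP constraints). -/
structure IsFriendlyLPSol (G : CCInst V) (Xp Xn : Sym2 V → ℝ) : Prop where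
  nonneg_p : ∀ e : Sym2 V, 0 ≤ Xp e
  nonneg_n : ∀ e : Sym2 V, 0 ≤ Xn e
  congr_p : ∀ u v u' v' : V, sameSuper G u u' → sameSuper G v v' →
    Xp s(u, v) = Xp s(u', v')
  congr_n : ∀ u v u' v' : V, sameSuper G u u' → sameSuper G v v' →
    Xn s(u, v) = Xn s(u', v')
  same_p : ∀ u v : V, sameSuper G u v → Xp s(u, v) = 0
  same_n : ∀ u v : V, sameSuper G u v → Xn s(u, v) = 1
  tri_ppn : ∀ a b c : V, ¬ sameSuper G a b → ¬ sameSuper G b c → ¬ sameSuper G a c →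
    1 ≤ Xp s(a, b) + Xp s(b, c) + Xn s(a, c)
  tri_pnp : ∀ a b c : V, ¬ sameSuper G a b → ¬ sameSuper G b c → ¬ sameSuper G a c →
    1 ≤ Xp s(a, b) + Xn s(b, c) + Xp s(a, c)
  tri_npp : ∀ a b c : V, ¬ sameSuper G a b → ¬ sameSuper G b c → ¬ sameSuper G a c →
    1 ≤ Xn s(a, b) + Xp s(b, c) + Xp s(a, c)
  pair : ∀ u v : V, 1 ≤ Xp s(u, v) + Xn s(u, v)

/-- `(e, f)` is a dangerous triangle in a HostileCC instance: positive edges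
`e = ab`, `f = bc` with `ac ∈ H`. -/
def IsDangerousTriangle (G : CCInst V) (e f : Sym2 V) : Prop :=
  ∃ a b c : V, e = s(a, b) ∧ f = s(b, c) ∧ e ∈ G.Ep ∧ f ∈ G.Ep ∧ s(a, c) ∈ G.H

/-- The edges carrying different signs in `G0` and `G`. -/
noncomputable def flipped {V : Type*} [Fintype V] (G0 G : CCInst V) : Finset (Sym2 V) :=
  Finset.univ.filter fun e => (e ∈ G0.Ep ∧ e ∈ G.En) ∨ (e ∈ G0.En ∧ e ∈ G.Ep)

/-- The edges on which the clustering `C` disagrees with the signs of `G`. -/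
noncomputable def disagree {V : Type*} [Fintype V] (G : CCInst V) {L : Type*} (C : V → L) :
    Finset (Sym2 V) :=
  Finset.univ.filter fun e => (e ∈ G.Ep ∧ ¬ (e.map C).IsDiag) ∨ (e ∈ G.En ∧ (e.map C).IsDiag)

theorem cost_eq_card_disagree {V : Type*} [Fintype V] (G : CCInst V) {L : Type*} (C : V → L) :
    cost G C = (disagree G C).card := by
  unfold cost disagree
  rw [← Finset.card_union_of_disjoint]
  · congr 1
    ext e
    simp
  · rw [Finset.disjoint_left]
    intro e h1 h2
    exact (Finset.mem_filter.1 h1).2 (Finset.mem_filter.1 h2).2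

theorem Feasible.eq_of_sameSuper {V : Type*} {G : CCInst V} {L : Type*} {C : V → L}
    (h : Feasible G C) {u v : V} (huv : sameSuper G u v) : C u = C v := by
  induction huv with
  | refl => rfl
  | tail _ hbc ih => exact ih.trans (h.1 _ _ hbc)

theorem Feasible.ne_of_hostileSuper {V : Type*} {G : CCInst V} {L : Type*} {C : V → L}
    (h : Feasible G C) {u v : V} (huv : hostileSuper G u v) : C u ≠ C v := by
  obtain ⟨-, a, b, ha, hb, hab⟩ := huv
  rw [h.eq_of_sameSuper ha, h.eq_of_sameSuper hb]
  exact h.2 _ _ hab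

/-- Passing to the consistent form lowers the cost of every feasible clustering by the number of
flipped edges. -/
theorem cost_eq_add_flipped {V : Type*} [Fintype V] {G0 G : CCInst V}
    (hcf : IsConsistentFormOf G G0) {L : Type*} {C : V → L} (hC : Feasible G0 C) :
    cost G0 C = cost G C + (flipped G0 G).card := by
  have key : ∀ e, (e ∈ disagree G0 C ↔ e ∈ disagree G C ∨ e ∈ flipped G0 G) ∧
      ¬ (e ∈ disagree G C ∧ e ∈ flipped G0 G) := by
    intro e
    induction e using Sym2.ind with
    | _ u v =>
      simp only [disagree, flipped, Finset.mem_filter, Finset.mem_univ, true_and,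
        Sym2.map_mk, Sym2.mk_isDiag_iff]
      have p0 := G0.mem_Ep_iff s(u, v)
      have p1 := G.mem_Ep_iff s(u, v)
      have n0 := G0.not_isDiag_of_mem_En s(u, v)
      have n1 := G.not_isDiag_of_mem_En s(u, v)
      rw [Sym2.mk_isDiag_iff] at p0 p1 n0 n1
      by_cases huv : u = v
      · simp only [huv, not_true_eq_false, false_and, iff_false] at p0 p1 n0 n1 ⊢
        grind
      · obtain ⟨hs, hh, ho⟩ := hcf.2.2 u v huv
        have hs' := fun h => hC.eq_of_sameSuper (u := u) (v := v) h
        have hh' := fun h => hC.ne_of_hostileSuper (u := u) (v := v) h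
        by_cases h1 : sameSuper G0 u v
        · grind
        · by_cases h2 : hostileSuper G0 u v
          · grind
          · grind
  rw [cost_eq_card_disagree, cost_eq_card_disagree, ← Finset.card_union_of_disjoint]
  · congr 1
    ext e
    rw [Finset.mem_union]
    exact (key e).1
  · rw [Finset.disjoint_left]
    exact fun e h1 h2 => (key e).2 ⟨h1, h2⟩

/-- Lemma 2.3.  An `α`-approximate feasible clustering for the
consistent form `G` of `G0` is an `α`-approximate feasible clustering for `G0`. -/
theorem stmt0 {V : Type*} [Fintype V] [DecidableEq V] {L : Type*}
    (G0 G : CCInst V)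
    (hfeas : ∃ C0 : V → V, Feasible G0 C0)
    (hcf : IsConsistentFormOf G G0)
    (α : ℝ) (hα : 1 ≤ α)
    (C : V → L) (hCfeas : Feasible G C)
    (happrox : ∀ C' : V → V, Feasible G C' → (cost G C : ℝ) ≤ α * (cost G C' : ℝ)) :
    ∀ C' : V → V, Feasible G0 C' → (cost G0 C : ℝ) ≤ α * (cost G0 C' : ℝ) := by
  intro C' hC'
  have hG : Feasible G C' := by
    simpa only [Feasible, hcf.1, hcf.2.1] using hC'
  have h := happrox C' hG
  have hC0 : Feasible G0 C := by
    simpa only [Feasible, hcf.1, hcf.2.1] using hCfeas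
  rw [cost_eq_add_flipped hcf hC0, cost_eq_add_flipped hcf hC']
  push_cast
  have hK : (0 : ℝ) ≤ ((flipped G0 G).card : ℝ) := Nat.cast_nonneg _
  nlinarith [mul_nonneg (sub_nonneg.2 hα) hK]

end CCC
end

section
/- Let G be a consistent-form ConstrainedCC instance, 𝒟 a maximal edge-disjoint set of dangerous pairs, and (X⁺, X⁻) a feasible solution of the constrained covering LP. Then the auxiliary graph Ĝ is pivot-safe for G: (1) s(i) = s(j) implies ij ∈ Ê⁺ and i and j have identical positive and negative neighborhoods in Ĝ, and (2) (S(i), S(j)) ∈ H implies ij ∈ Ê⁻ and no vertex k satisfies ik ∈ Ê⁺ and jk ∈ Ê⁺. -/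
/-!
Apart from `u ≠ v`, the conditions defining a positive pair `uv` of `Ĝ` depend only on the supernodes of
`u` and `v`, so vertices of one supernode have the same neighborhoods
(`hatPos_of_sameSuper`).

A hostile pair has `X⁺ = 1`, hence is never positive.  If `i`, `j` are hostile and `k` were
positively joined to both, then `k` lies in neither supernode, so there are positive edges
outside `E_𝒟` from the supernode of `k` to those of `i` and `j`.  These two edges form a dangerous
pair that can be added to `𝒟` without losing edge-disjointness, contradicting maximality
(`MaximalDangerous.mem_EDset_or`).
-/

open scoped Classical

namespace CCC

variable {V : Type*} [Fintype V] [DecidableEq V]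

theorem sameSuper.symm {V : Type*} {G : CCInst V} {u v : V} (h : sameSuper G u v) :
    sameSuper G v u := by
  have : Std.Symm (fun a b : V => s(a, b) ∈ G.F) :=
    ⟨fun a b hab => by rwa [Sym2.eq_swap]⟩
  exact Relation.ReflTransGen.stdSymm.symm _ _ h

theorem sameSuper.trans {V : Type*} {G : CCInst V} {u v w : V} (h : sameSuper G u v)
    (h' : sameSuper G v w) : sameSuper G u w :=
  Relation.ReflTransGen.trans h h'

theorem hostileSuper.symm {V : Type*} {G : CCInst V} {u v : V} (h : hostileSuper G u v) :
    hostileSuper G v u := by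
  obtain ⟨hn, a, b, ha, hb, hab⟩ := h
  exact ⟨fun hs => hn hs.symm, b, a, hb, ha, by rwa [Sym2.eq_swap]⟩

theorem hostileSuper.congr {V : Type*} {G : CCInst V} {u v u' v' : V} (h : hostileSuper G u v)
    (hu : sameSuper G u u') (hv : sameSuper G v v') : hostileSuper G u' v' := by
  obtain ⟨hn, a, b, ha, hb, hab⟩ := h
  exact ⟨fun hs => hn (hu.trans (hs.trans hv.symm)), a, b, hu.symm.trans ha,
    hv.symm.trans hb, hab⟩

/-- By maximality, a dangerous pair has at least one edge in `E_𝒟`. -/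
theorem MaximalDangerous.mem_EDset_or {V : Type*} [DecidableEq V] {G : CCInst V}
    {D : Finset (Sym2 V × Sym2 V)} (hD : MaximalDangerous G D) {e f : Sym2 V}
    (hef : IsDangerousPair G e f) : e ∈ EDset D ∨ f ∈ EDset D := by
  by_contra! hn
  obtain ⟨he, hf⟩ := hn
  have key : ∀ q ∈ D, ∀ g, InPair g (e, f) → ¬ InPair g q := by
    rintro q hq g (rfl | rfl) hgq
    · exact he ⟨q, hq, hgq⟩
    · exact hf ⟨q, hq, hgq⟩
  refine he ⟨(e, f), hD.2 e f hef ?_, Or.inl rfl⟩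
  intro p hp q hq g hgp hgq
  rcases Finset.mem_insert.1 hp with rfl | hp <;> rcases Finset.mem_insert.1 hq with rfl | hq
  · rfl
  · exact (key q hq g hgp hgq).elim
  · exact (key p hp g hgq hgp).elim
  · exact hD.1.2 p hp q hq g hgp hgq

section LPSolution

variable {V : Type*} [DecidableEq V] {G : CCInst V} {D : Finset (Sym2 V × Sym2 V)}
  {Xp Xn : Sym2 V → ℝ}

theorem hatPos_of_sameSuper (hsol : IsLPSol G D Xp Xn) {i j k : V}
    (hij : sameSuper G i j) (hjk : j ≠ k) (h : hatPos G D Xp Xn i k) :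
    hatPos G D Xp Xn j k := by
  refine ⟨hjk, ?_⟩
  rcases h.2 with h | ⟨⟨a, b, ha, hb, hab⟩, hX⟩
  · exact Or.inl (hij.symm.trans h)
  · refine Or.inr ⟨⟨a, b, hij.symm.trans ha, hb, hab⟩, ?_⟩
    rwa [hsol.congr_p i k j k hij .refl, hsol.congr_n i k j k hij .refl] at hX

theorem not_hatPos_of_hostileSuper (hsol : IsLPSol G D Xp Xn) {i j : V}
    (h : hostileSuper G i j) : ¬ hatPos G D Xp Xn i j := by
  rintro ⟨-, hs | ⟨-, hX⟩⟩
  · exact h.1 hs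
  · rw [hsol.host_p i j h] at hX
    linarith [(lt_min_iff.1 hX).2]

end LPSolution

/-- Lemma 3.3.  The auxiliary graph `Ĝ` built from a feasible
LP solution is pivot-safe for `G`. -/
theorem stmt5 {V : Type*} [Fintype V] [DecidableEq V] (G : CCInst V)
    (D : Finset (Sym2 V × Sym2 V)) (Xp Xn : Sym2 V → ℝ)
    (hG : ConsistentForm G) (hD : MaximalDangerous G D)
    (hsol : IsLPSol G D Xp Xn) :
    PivotSafe G (hatPos G D Xp Xn) := by
  refine ⟨fun i j hne hs => ⟨⟨hne, Or.inl hs⟩, fun k hki hkj =>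
    ⟨hatPos_of_sameSuper hsol hs hkj.symm, hatPos_of_sameSuper hsol hs.symm hki.symm⟩⟩,
    fun i j hh => ⟨not_hatPos_of_hostileSuper hsol hh, ?_⟩⟩
  rintro k ⟨hik, hjk⟩
  -- If `k` shares a supernode with `i` (or `j`), then it is hostile to the other vertex.
  rcases hik.2 with hs | ⟨⟨a, b, ha, hb, hab, habD⟩, -⟩
  · exact not_hatPos_of_hostileSuper hsol (hh.symm.congr .refl hs) hjk
  rcases hjk.2 with hs | ⟨⟨d, c, hd, hc, hdc, hdcD⟩, -⟩
  · exact not_hatPos_of_hostileSuper hsol (hh.congr .refl hs) hik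
  rcases hD.mem_EDset_or ⟨a, b, c, d, rfl, Sym2.eq_swap, hab, hdc, hb.symm.trans hc,
    hh.congr ha hd⟩ with h | h
  · exact habD h
  · exact hdcD h

end CCC
end
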